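/- Let (V,p) be an irreducible Markov chain with symmetric support on a finite state space, and let d:V×V→[0,∞) be a general path distance on V. Define δ₀f(x,y)=f(x)−f(y) on edges, δ₁α(c) = the cyclic sum of α along a cycle c∈X₂, and δ^{(*)}α(x)=Σ_{y∈V}p(x,y)α(x,y). Set H₁(M₂(G)) = {antisymmetric 1-forms α : δ₁α=0 on X₂ and δ^{(*)}α is a constant function on V} and β₁(M₂(G)) = dim(ker δ₁ / Im δ₀). Then β₁(M₂(G)) = dim H₁(M₂(G)). -/

import Mathlib

/-!
The spaces `ker δ₁`, `Im δ₀` and `H₁` are linear, so the spans in the statement are harmless, and it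
suffices to prove that `ker δ₁ = Im δ₀ ⊕ H₁`. The composition `δ^{(*)} δ₀` is `f ↦ f - P f`.
By the maximum principle (`const_of_div_const`), if `f - P f` is a constant function then `f` itself
is constant, so `Im δ₀ ∩ H₁ = 0`. The same fact makes the endomorphism `f ↦ f - P f + f(o)`
(for a base point `o`) injective, hence surjective as `V` is finite (`exists_potential`); so every
function is of the form `f - P f + const`. Applied to `δ^{(*)} α`, this decomposes `α` as
`δ₀ f + (α - δ₀ f)` with `α - δ₀ f ∈ H₁`.
-/

open Finset

namespace Paper

variable {V : Type*}

/-- Adjacency relation of a weighted graph: `x ∼ y` iff `w x y > 0`. -/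
def Adj (w : V → V → ℝ) (x y : V) : Prop := 0 < w x y

/-- The axioms of a weighted graph `(V, w, μ)`: `w` symmetric, nonnegative, vanishing on the
diagonal, and `μ` positive. -/
structure IsWeightedGraph (w : V → V → ℝ) (μ : V → ℝ) : Prop where
  symm : ∀ x y, w x y = w y x
  nonneg : ∀ x y, 0 ≤ w x y
  loopless : ∀ x, w x x = 0
  mu_pos : ∀ x, 0 < μ x

/-- Connectedness of the weighted graph. -/
def GraphConnected (w : V → V → ℝ) : Prop :=
  ∀ x y : V, ∃ (n : ℕ) (c : Fin (n + 1) → V), c 0 = x ∧ c (Fin.last n) = y ∧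
    ∀ i : Fin n, Adj w (c i.castSucc) (c i.succ)

/-- `d` is a general path distance for the graph with edge weight `w`:
symmetric, vanishing exactly on the diagonal, nonnegative, and equal to the infimum of the
lengths of paths joining the two points. -/
def IsPathDistance (w : V → V → ℝ) (d : V → V → ℝ) : Prop :=
  (∀ x y, d x y = d y x) ∧ (∀ x y, d x y = 0 ↔ x = y) ∧ (∀ x y, 0 ≤ d x y) ∧
  ∀ x y : V, IsGLB { s : ℝ |
      ∃ (n : ℕ) (c : Fin (n + 1) → V), c 0 = x ∧ c (Fin.last n) = y ∧
        (∀ i : Fin n, Adj w (c i.castSucc) (c i.succ)) ∧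
        s = ∑ i : Fin n, d (c i.castSucc) (c i.succ) } (d x y)

section Finite

variable [Fintype V]

/-- The (negative) graph Laplacian `Δ f (x) = ∑_y (w x y / μ x) (f y - f x)`. -/
noncomputable def lap (w : V → V → ℝ) (μ : V → ℝ) (f : V → ℝ) (x : V) : ℝ :=
  ∑ y, w x y / μ x * (f y - f x)

/-- The gradient `∇_{xy} f = (f x - f y)/d(x,y)`. -/
noncomputable def grad (d : V → V → ℝ) (f : V → ℝ) (x y : V) : ℝ := (f x - f y) / d x y

/-- The Lipschitz norm `‖∇ f‖_∞ = sup_{x ∼ y} |∇_{xy} f|`. -/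
noncomputable def gradNorm (w d : V → V → ℝ) (f : V → ℝ) : ℝ :=
  sSup { r : ℝ | ∃ x y, Adj w x y ∧ r = |grad d f x y| }

/-- The Ollivier curvature `κ(x,y) = inf {∇_{xy} Δ f : ∇_{yx} f = 1, ‖∇ f‖_∞ = 1}`. -/
noncomputable def kappa (w : V → V → ℝ) (μ : V → ℝ) (d : V → V → ℝ) (x y : V) : ℝ :=
  sInf { r : ℝ | ∃ f : V → ℝ, grad d f y x = 1 ∧ gradNorm w d f = 1 ∧
      r = grad d (lap w μ f) x y }

/-- Non-negative Ollivier curvature on every edge. -/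
def NonnegCurv (w : V → V → ℝ) (μ : V → ℝ) (d : V → V → ℝ) : Prop :=
  ∀ x y, Adj w x y → 0 ≤ kappa w μ d x y

/-- A cycle of length `n + 3`: an injective cyclic path along edges. -/
def IsCycle {n : ℕ} (w : V → V → ℝ) (c : ZMod (n + 3) → V) : Prop :=
  Function.Injective c ∧ ∀ i, Adj w (c i) (c (i + 1))

/-- Membership of a cycle in `X₂`: either a triangle, or
`d(x₀,x₃) < d(x₀,x₁)+d(x₁,x₂)+d(x₂,x₃)` and `x₃ ∼ … ∼ x_{n-1} ∼ x₀` is a geodesic. -/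
def InX2 {n : ℕ} (w d : V → V → ℝ) (c : ZMod (n + 3) → V) : Prop :=
  n = 0 ∨
    (d (c 0) (c 3) < d (c 0) (c 1) + d (c 1) (c 2) + d (c 2) (c 3) ∧
      ∑ i ∈ Finset.univ.filter (fun i : ZMod (n + 3) => i ≠ 0 ∧ i ≠ 1 ∧ i ≠ 2),
          d (c i) (c (i + 1)) = d (c 3) (c 0))

/-- The set of harmonic 1-forms `H₁(M₂(G))`: antisymmetric functions supported on edges
with vanishing cyclic sum along every cycle of `X₂` and vanishing divergence `δ* α`. -/
def H1set (w : V → V → ℝ) (μ : V → ℝ) (d : V → V → ℝ) : Set (V → V → ℝ) :=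
  { α | (∀ x y, α x y = -α y x) ∧ (∀ x y, ¬Adj w x y → α x y = 0) ∧
      (∀ (n : ℕ) (c : ZMod (n + 3) → V), IsCycle w c → InX2 w d c →
          ∑ i, α (c i) (c (i + 1)) = 0) ∧
      (∀ x, ∑ y, w x y / μ x * α x y = 0) }

/-- The first Betti number `β₁(M₂(G)) = dim H₁(M₂(G))`. -/
noncomputable def betti1 (w : V → V → ℝ) (μ : V → ℝ) (d : V → V → ℝ) : ℕ :=
  Module.finrank ℝ (Submodule.span ℝ (H1set w μ d))

/-- The combinatorial vertex degree. -/
noncomputable def deg (w : V → V → ℝ) (x : V) : ℕ := Nat.card { y : V // Adj w x y }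

/-- The minimal combinatorial vertex degree. -/
noncomputable def degMin (w : V → V → ℝ) : ℕ := ⨅ x : V, deg w x

/-- The maximal combinatorial vertex degree. -/
noncomputable def degMax (w : V → V → ℝ) : ℕ := ⨆ x : V, deg w x

end Finite

end Paper

namespace Paper

variable {V : Type*} [Fintype V]

/-- `ker δ₁`: antisymmetric 1-forms supported on edges whose cyclic sums along the cycles of
`X₂` vanish. Here the edge weight is the Markov kernel `p`. -/
def kerDelta1Set (p d : V → V → ℝ) : Set (V → V → ℝ) :=
  { α | (∀ x y, α x y = -α y x) ∧ (∀ x y, ¬Adj p x y → α x y = 0) ∧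
      (∀ (n : ℕ) (c : ZMod (n + 3) → V), IsCycle p c → InX2 p d c →
          ∑ i, α (c i) (c (i + 1)) = 0) }

/-- `Im δ₀`: the 1-forms `δ₀ f (x,y) = f(x) − f(y)` (on edges) of functions `f : V → ℝ`. -/
noncomputable def imDelta0Set (p : V → V → ℝ) : Set (V → V → ℝ) :=
  { α | ∃ f : V → ℝ, ∀ x y, α x y = if 0 < p x y then f x - f y else 0 }

/-- The harmonic space for a (possibly non-reversible) Markov chain:
`H₁(M₂(G)) = {α : δ₁ α = 0 on X₂ and δ^{(*)} α constant}` where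
`δ^{(*)} α (x) = ∑_y p(x,y) α(x,y)`. -/
def H1MCset (p d : V → V → ℝ) : Set (V → V → ℝ) :=
  { α | α ∈ kerDelta1Set p d ∧ ∃ C : ℝ, ∀ x, ∑ y, p x y * α x y = C }

/-- The first Betti number `β₁(M₂(G)) = dim (ker δ₁ / Im δ₀)` for a Markov chain. -/
noncomputable def bettiMC (p d : V → V → ℝ) : ℕ :=
  Module.finrank ℝ
    ((Submodule.span ℝ (kerDelta1Set p d)) ⧸
      (Submodule.comap (Submodule.span ℝ (kerDelta1Set p d)).subtype
        (Submodule.span ℝ (imDelta0Set p))))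

end Paper

namespace Paper

/-- Maximum principle: the constant is nonnegative at a maximum of `f` and nonpositive at a
minimum, so it vanishes, and then the set of maximum points is closed under adjacency. -/
lemma const_of_div_const {V : Type*} [Fintype V] [Nonempty V] (p : V → V → ℝ)
    (hp0 : ∀ x y, 0 ≤ p x y)
    (hirr : ∀ x y : V, ∃ (n : ℕ) (c : Fin (n + 1) → V), c 0 = x ∧ c (Fin.last n) = y ∧
        ∀ i : Fin n, 0 < p (c i.castSucc) (c i.succ))
    (f : V → ℝ) (C : ℝ) (h : ∀ x, ∑ y, p x y * (f x - f y) = C) :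
    C = 0 ∧ ∀ x y, f x = f y := by
  obtain ⟨a, ha⟩ := Finite.exists_max f
  obtain ⟨b, hb⟩ := Finite.exists_min f
  have hC0 : 0 ≤ C := by
    rw [← h a]
    exact Finset.sum_nonneg fun y _ => mul_nonneg (hp0 a y) (sub_nonneg.2 (ha y))
  have hC1 : C ≤ 0 := by
    rw [← h b]
    exact Finset.sum_nonpos fun y _ =>
      mul_nonpos_of_nonneg_of_nonpos (hp0 b y) (sub_nonpos.2 (hb y))
  have hC : C = 0 := le_antisymm hC1 hC0
  have step : ∀ x y, f x = f a → 0 < p x y → f y = f a := by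
    intro x y hx hxy
    have hs := h x
    rw [hC, Finset.sum_eq_zero_iff_of_nonneg
      (fun z _ => mul_nonneg (hp0 x z) (sub_nonneg.2 (hx ▸ ha z)))] at hs
    have := (mul_eq_zero.1 (hs y (Finset.mem_univ y))).resolve_left hxy.ne'
    linarith
  have all : ∀ y, f y = f a := by
    intro y
    obtain ⟨n, c, h0, hn, hc⟩ := hirr a y
    have : ∀ i, f (c i) = f a := by
      intro i
      induction i using Fin.induction with
      | zero => rw [h0]
      | succ i ih => exact step _ _ ih (hc i)
    rw [← hn]
    exact this _
  exact ⟨hC, fun x y => (all x).trans (all y).symm⟩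

/-- Every function is of the form `f - P f + const`. -/
lemma exists_potential {V : Type*} [Fintype V] [Nonempty V] (p : V → V → ℝ)
    (hp0 : ∀ x y, 0 ≤ p x y)
    (hirr : ∀ x y : V, ∃ (n : ℕ) (c : Fin (n + 1) → V), c 0 = x ∧ c (Fin.last n) = y ∧
        ∀ i : Fin n, 0 < p (c i.castSucc) (c i.succ))
    (g : V → ℝ) : ∃ (f : V → ℝ) (C : ℝ), ∀ x, ∑ y, p x y * (f x - f y) + C = g x := by
  obtain ⟨o⟩ := ‹Nonempty V›
  let T : (V → ℝ) →ₗ[ℝ] (V → ℝ) :=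
    { toFun := fun f x => ∑ y, p x y * (f x - f y) + f o
      map_add' := by
        intro f f'
        ext x
        have : ∑ y, p x y * ((f + f') x - (f + f') y)
            = ∑ y, p x y * (f x - f y) + ∑ y, p x y * (f' x - f' y) := by
          rw [← Finset.sum_add_distrib]
          exact Finset.sum_congr rfl fun y _ => by simp only [Pi.add_apply]; ring
        rw [this]
        simp only [Pi.add_apply]
        ring
      map_smul' := by
        intro r f
        ext x
        have : ∑ y, p x y * ((r • f) x - (r • f) y) = r * ∑ y, p x y * (f x - f y) := by
          rw [Finset.mul_sum]
          exact Finset.sum_congr rfl fun y _ => by simp only [Pi.smul_apply, smul_eq_mul]; ring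
        rw [this]
        simp only [Pi.smul_apply, smul_eq_mul, RingHom.id_apply]
        ring }
  have hinj : Function.Injective T := by
    rw [injective_iff_map_eq_zero]
    intro f hf
    have hx : ∀ x, ∑ y, p x y * (f x - f y) = -f o := fun x => by
      have : ∑ y, p x y * (f x - f y) + f o = 0 := congrFun hf x
      linarith
    have : Nonempty V := ⟨o⟩
    obtain ⟨h0, hc⟩ := const_of_div_const p hp0 hirr f _ hx
    ext x
    rw [hc x o]
    simpa using h0
  obtain ⟨f, hf⟩ := LinearMap.injective_iff_surjective.1 hinj g
  exact ⟨f, f o, fun x => congrFun hf x⟩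

/-- `ker δ₁` as a subspace. -/
def kerSub {V : Type*} [Fintype V] (p d : V → V → ℝ) : Submodule ℝ (V → V → ℝ) where
  carrier := kerDelta1Set p d
  zero_mem' := ⟨by simp, by simp, by simp⟩
  add_mem' := by
    rintro α β ⟨a1, a2, a3⟩ ⟨b1, b2, b3⟩
    refine ⟨fun x y => ?_, fun x y h => ?_, fun n c hc hX => ?_⟩
    · simp only [Pi.add_apply]
      rw [a1 x y, b1 x y]
      ring
    · simp [a2 x y h, b2 x y h]
    · simp only [Pi.add_apply]
      rw [Finset.sum_add_distrib, a3 n c hc hX, b3 n c hc hX, add_zero]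
  smul_mem' := by
    rintro r α ⟨a1, a2, a3⟩
    refine ⟨fun x y => ?_, fun x y h => ?_, fun n c hc hX => ?_⟩
    · simp only [Pi.smul_apply, smul_eq_mul]
      rw [a1 x y]
      ring
    · simp [a2 x y h]
    · simp only [Pi.smul_apply, smul_eq_mul]
      rw [← Finset.mul_sum, a3 n c hc hX, mul_zero]

/-- `Im δ₀` as a subspace. -/
noncomputable def imSub {V : Type*} [Fintype V] (p : V → V → ℝ) :
    Submodule ℝ (V → V → ℝ) where
  carrier := imDelta0Set p
  zero_mem' := ⟨0, by simp⟩
  add_mem' := by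
    rintro α β ⟨f, hf⟩ ⟨g, hg⟩
    refine ⟨f + g, fun x y => ?_⟩
    simp only [Pi.add_apply]
    rw [hf, hg]
    split_ifs <;> ring
  smul_mem' := by
    rintro r α ⟨f, hf⟩
    refine ⟨r • f, fun x y => ?_⟩
    simp only [Pi.smul_apply, smul_eq_mul]
    rw [hf]
    split_ifs <;> ring

/-- `H₁(M₂(G))` as a subspace. -/
def harmSub {V : Type*} [Fintype V] (p d : V → V → ℝ) : Submodule ℝ (V → V → ℝ) where
  carrier := H1MCset p d
  zero_mem' := ⟨(kerSub p d).zero_mem, 0, by simp⟩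
  add_mem' := by
    rintro α β ⟨hα, C, hC⟩ ⟨hβ, D, hD⟩
    refine ⟨(kerSub p d).add_mem hα hβ, C + D, fun x => ?_⟩
    simp only [Pi.add_apply, mul_add]
    rw [Finset.sum_add_distrib, hC, hD]
  smul_mem' := by
    rintro r α ⟨hα, C, hC⟩
    refine ⟨(kerSub p d).smul_mem r hα, r * C, fun x => ?_⟩
    rw [← hC x, Finset.mul_sum]
    exact Finset.sum_congr rfl fun y _ => by simp only [Pi.smul_apply, smul_eq_mul]; ring

/-- `δ₁ δ₀ = 0`: the cyclic sums of a gradient telescope. -/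
lemma imSub_le_kerSub {V : Type*} [Fintype V] (p d : V → V → ℝ)
    (hsymm : ∀ x y, 0 < p x y ↔ 0 < p y x) : imSub p ≤ kerSub p d := by
  rintro α ⟨f, hf⟩
  refine ⟨fun x y => ?_, fun x y h => ?_, fun n c hc _ => ?_⟩
  · rw [hf x y, hf y x]
    simp only [hsymm x y]
    split_ifs <;> ring
  · rw [hf x y]
    exact if_neg h
  · have h1 : ∀ i, α (c i) (c (i + 1)) = f (c i) - f (c (i + 1)) := fun i => by
      rw [hf]
      exact if_pos (hc.2 i)
    simp only [h1]
    rw [Finset.sum_sub_distrib, sub_eq_zero]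
    exact (Equiv.sum_comp (Equiv.addRight (1 : ZMod (n + 3))) fun i => f (c i)).symm

/-- The divergence of a gradient; entries off the support contribute zero on both sides. -/
lemma div_grad {V : Type*} [Fintype V] (p : V → V → ℝ) (hp0 : ∀ x y, 0 ≤ p x y)
    (f : V → ℝ) (x : V) :
    ∑ y, p x y * (if 0 < p x y then f x - f y else 0) = ∑ y, p x y * (f x - f y) := by
  refine Finset.sum_congr rfl fun y _ => ?_
  split_ifs with h
  · rfl
  · rw [le_antisymm (not_lt.1 h) (hp0 x y)]
    simp

/-- A complement `H` of `I` inside `K` has the dimension of the quotient `K / I`. -/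
lemma finrank_quot_of_compl {E : Type*} [AddCommGroup E] [Module ℝ E] (K I H : Submodule ℝ E)
    (hH : H ≤ K) (hdisj : ∀ v ∈ I, v ∈ H → v = 0)
    (hsup : ∀ v ∈ K, ∃ u ∈ I, v - u ∈ H) :
    Module.finrank ℝ (K ⧸ I.comap K.subtype) = Module.finrank ℝ H := by
  have hcompl : IsCompl (I.comap K.subtype) (H.comap K.subtype) := by
    constructor
    · rw [Submodule.disjoint_def]
      intro v hI hv
      exact Subtype.ext (hdisj v hI hv)
    · rw [codisjoint_iff, eq_top_iff]
      intro v _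
      obtain ⟨u, hu, hvu⟩ := hsup v v.2
      have huK : u ∈ K := by
        have := K.sub_mem v.2 (hH hvu)
        simpa using this
      rw [Submodule.mem_sup]
      exact ⟨⟨u, huK⟩, hu, v - ⟨u, huK⟩, hvu, by simp⟩
  exact ((Submodule.quotientEquivOfIsCompl _ _ hcompl).trans
    (Submodule.comapSubtypeEquivOfLe hH)).finrank_eq

end Paper

open Paper in
/-- **Lemma (the quotient Betti number equals the dimension of the harmonic space).**
Let `(V,p)` be an irreducible Markov chain with symmetric support on a finite state space and
let `d` be a general path distance. Then `β₁(M₂(G)) = dim (ker δ₁ / Im δ₀)` equals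
`dim H₁(M₂(G))`, where `H₁(M₂(G))` is the space of 1-forms with vanishing cyclic sums on `X₂`
and constant divergence `δ^{(*)} α`. -/
theorem markov_betti_eq_dim_harmonic
    {V : Type*} [Fintype V] [Nonempty V] (p : V → V → ℝ) (d : V → V → ℝ)
    (hp0 : ∀ x y, 0 ≤ p x y) (hp1 : ∀ x y, p x y ≤ 1) (hrow : ∀ x, ∑ y, p x y = 1)
    (hirr : ∀ x y : V, ∃ (n : ℕ) (c : Fin (n + 1) → V), c 0 = x ∧ c (Fin.last n) = y ∧
        ∀ i : Fin n, 0 < p (c i.castSucc) (c i.succ))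
    (hsymm : ∀ x y, 0 < p x y ↔ 0 < p y x)
    (hd : IsPathDistance p d) :
    bettiMC p d = Module.finrank ℝ (Submodule.span ℝ (H1MCset p d)) := by
  have hK : Submodule.span ℝ (kerDelta1Set p d) = kerSub p d := Submodule.span_eq (kerSub p d)
  have hI : Submodule.span ℝ (imDelta0Set p) = imSub p := Submodule.span_eq (imSub p)
  have hH : Submodule.span ℝ (H1MCset p d) = harmSub p d := Submodule.span_eq (harmSub p d)
  unfold bettiMC
  rw [hK, hI, hH]
  refine finrank_quot_of_compl _ _ _ (fun α hα => hα.1) ?_ ?_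
  · rintro α ⟨f, hf⟩ ⟨_, C, hC⟩
    have hdiv : ∀ x, ∑ y, p x y * (f x - f y) = C := fun x => by
      rw [← hC x, ← div_grad p hp0]
      exact Finset.sum_congr rfl fun y _ => by rw [hf]
    obtain ⟨_, hconst⟩ := const_of_div_const p hp0 hirr f C hdiv
    ext x y
    rw [hf, hconst x y]
    simp
  · intro α hα
    obtain ⟨f, C, hf⟩ := exists_potential p hp0 hirr fun x => ∑ y, p x y * α x y
    have hmem : (fun x y => if 0 < p x y then f x - f y else 0) ∈ imSub p :=
      ⟨f, fun x y => rfl⟩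
    refine ⟨_, hmem, (kerSub p d).sub_mem hα (imSub_le_kerSub p d hsymm hmem), C, fun x => ?_⟩
    simp only [Pi.sub_apply, mul_sub _ (α _ _)]
    rw [Finset.sum_sub_distrib, div_grad p hp0, ← hf x]
    ring
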